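/- arXiv:1708.04579 — 2 statements merged into one kernel-verified Lean document; each statement's English description precedes it below -/
import Mathlib

section
/- Every discrete midpoint convex set S ⊆ ℤⁿ is integrally convex; that is, every point x of the convex hull of S (in ℝⁿ) lies in the convex hull of S ∩ N(x). -/
/-- The ℓ∞-norm of an integer vector, as a natural number. -/
def linf {n : ℕ} (z : Fin n → ℤ) : ℕ :=
  Finset.univ.sup fun i => (z i).natAbs

/-- Componentwise round-up of (x+y)/2. -/
def avgUp {n : ℕ} (x y : Fin n → ℤ) : Fin n → ℤ :=
  fun i => ⌈((x i + y i : ℚ)) / 2⌉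

/-- Componentwise round-down of (x+y)/2. -/
def avgDown {n : ℕ} (x y : Fin n → ℤ) : Fin n → ℤ :=
  fun i => ⌊((x i + y i : ℚ)) / 2⌋

/-- A set `S ⊆ ℤⁿ` is discrete midpoint convex. -/
def DMCSet {n : ℕ} (S : Set (Fin n → ℤ)) : Prop :=
  ∀ ⦃x⦄, x ∈ S → ∀ ⦃y⦄, y ∈ S → 2 ≤ linf (x - y) →
    avgUp x y ∈ S ∧ avgDown x y ∈ S

/-- The integral neighborhood of a real point. -/
def intNbhd {n : ℕ} (x : Fin n → ℝ) : Set (Fin n → ℤ) :=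
  {z | ∀ i, |x i - (z i : ℝ)| < 1}

/-- The squared Euclidean norm of an integer vector, as a real number. -/
def sqNorm {n : ℕ} (z : Fin n → ℤ) : ℝ := ∑ i, (z i : ℝ) ^ 2

lemma two_le_linf_iff {n : ℕ} (z : Fin n → ℤ) : 2 ≤ linf z ↔ ∃ i, 2 ≤ (z i).natAbs := by
  simp [linf, Finset.le_sup_iff]

lemma avgUp_apply {n : ℕ} (y z : Fin n → ℤ) (i : Fin n) :
    avgUp y z i = (y i + z i + 1) / 2 := by
  have h : ((y i + z i + 1) / 2 : ℤ) * 2 ≤ y i + z i + 1 ∧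
      y i + z i ≤ ((y i + z i + 1) / 2 : ℤ) * 2 := by omega
  unfold avgUp
  rw [Int.ceil_eq_iff]
  have h1 : ((((y i + z i + 1) / 2 : ℤ) : ℚ)) * 2 ≤ y i + z i + 1 := by exact_mod_cast h.1
  have h2 : (y i + z i : ℚ) ≤ (((y i + z i + 1) / 2 : ℤ) : ℚ) * 2 := by exact_mod_cast h.2
  constructor <;> linarith

lemma avgDown_apply {n : ℕ} (y z : Fin n → ℤ) (i : Fin n) :
    avgDown y z i = (y i + z i) / 2 := by
  have h := Rat.floor_intCast_div_natCast (y i + z i) 2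
  simpa [avgDown] using h

lemma avgUp_add_avgDown {n : ℕ} (y z : Fin n → ℤ) (i : Fin n) :
    avgUp y z i + avgDown y z i = y i + z i := by
  rw [avgUp_apply, avgDown_apply]
  omega

lemma avgUp_sub_avgDown_mem {n : ℕ} (y z : Fin n → ℤ) (i : Fin n) :
    (avgUp y z i - avgDown y z i = 0 ∨ avgUp y z i - avgDown y z i = 1) ∧
      (avgUp y z i - avgDown y z i = 1 → y i - z i ≠ 0) := by
  rw [avgUp_apply, avgDown_apply]
  omega

lemma two_mul_avg_sq {n : ℕ} (y z : Fin n → ℤ) (i : Fin n) :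
    2 * (avgUp y z i ^ 2 + avgDown y z i ^ 2) + (y i - z i) ^ 2 =
      2 * (y i ^ 2 + z i ^ 2) + (avgUp y z i - avgDown y z i) ^ 2 := by
  linear_combination (avgUp y z i + avgDown y z i + y i + z i) * avgUp_add_avgDown y z i

lemma avg_sq_le {n : ℕ} (y z : Fin n → ℤ) (i : Fin n) :
    avgUp y z i ^ 2 + avgDown y z i ^ 2 ≤ y i ^ 2 + z i ^ 2 := by
  have hs := two_mul_avg_sq y z i
  obtain ⟨h | h, hne⟩ := avgUp_sub_avgDown_mem y z i
  · rw [h] at hs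
    linarith [sq_nonneg (y i - z i)]
  · have h1 : 0 < (y i - z i) ^ 2 := by have := hne h; positivity
    rw [h] at hs
    linarith

lemma avg_sq_lt {n : ℕ} (y z : Fin n → ℤ) (i : Fin n) (h2 : 2 ≤ (y i - z i).natAbs) :
    avgUp y z i ^ 2 + avgDown y z i ^ 2 < y i ^ 2 + z i ^ 2 := by
  have hs := two_mul_avg_sq y z i
  have h4 : 2 ^ 2 ≤ (y i - z i) ^ 2 := sq_le_sq.2 (by rw [abs_two, Int.abs_eq_natAbs]; omega)
  obtain ⟨h | h, -⟩ := avgUp_sub_avgDown_mem y z i <;> rw [h] at hs <;> linarith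

/-- Replacing two distant points by their rounded midpoints decreases the sum of squared norms. -/
lemma sqNorm_avg_lt {n : ℕ} {y z : Fin n → ℤ} (h : 2 ≤ linf (y - z)) :
    sqNorm (avgUp y z) + sqNorm (avgDown y z) < sqNorm y + sqNorm z := by
  obtain ⟨j, hj⟩ := (two_le_linf_iff _).1 h
  simp only [sqNorm, ← Finset.sum_add_distrib]
  refine Finset.sum_lt_sum (fun i _ => ?_) ⟨j, Finset.mem_univ _, ?_⟩
  · exact_mod_cast avg_sq_le y z i
  · exact_mod_cast avg_sq_lt y z j hj

lemma DMCSet.inter_Icc {n : ℕ} {S : Set (Fin n → ℤ)} (hS : DMCSet S) (a b : Fin n → ℤ) :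
    DMCSet (S ∩ Set.Icc a b) := by
  rintro y ⟨hy, hay, hyb⟩ z ⟨hz, haz, hzb⟩ h
  obtain ⟨hu, hd⟩ := hS hy hz h
  refine ⟨⟨hu, fun i => ?_, fun i => ?_⟩, ⟨hd, fun i => ?_, fun i => ?_⟩⟩ <;>
  · have : a i ≤ y i ∧ y i ≤ b i ∧ a i ≤ z i ∧ z i ≤ b i := ⟨hay i, hyb i, haz i, hzb i⟩
    simp only [avgUp_apply, avgDown_apply]
    omega

/-- The weights on a finite set of integer vectors that represent `x` as a convex combination. -/
def reprWeights {n : ℕ} (T : Set (Fin n → ℤ)) [Fintype T] (x : Fin n → ℝ) : Set (T → ℝ) :=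
  {w | w ∈ stdSimplex ℝ T ∧ ∀ i, ∑ t, w t * ((t : Fin n → ℤ) i : ℝ) = x i}

lemma isCompact_reprWeights {n : ℕ} (T : Set (Fin n → ℤ)) [Fintype T] (x : Fin n → ℝ) :
    IsCompact (reprWeights T x) := by
  refine (isCompact_stdSimplex ℝ T).inter_right (t := {w | ∀ i, _ = x i}) ?_
  simp only [Set.ofPred_forall]
  exact isClosed_iInter fun i => isClosed_eq (by fun_prop) continuous_const

/-- A representation of minimal second moment is supported on points at mutual distance at most
one. -/
lemma linf_sub_lt_two_of_isMinOn {n : ℕ} {T : Set (Fin n → ℤ)} [Fintype T] (hT : DMCSet T)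
    {x : Fin n → ℝ} {w : T → ℝ} (hw : w ∈ reprWeights T x)
    (hmin : IsMinOn (fun w : T → ℝ => ∑ t, w t * sqNorm (t : Fin n → ℤ)) (reprWeights T x) w)
    {y z : T} (hy : 0 < w y) (hz : 0 < w z) :
    linf (y - z : Fin n → ℤ) < 2 := by
  classical
  by_contra! h
  obtain ⟨hu, hd⟩ := hT y.2 z.2 h
  have hyz : y ≠ z := by
    rintro rfl
    simp [two_le_linf_iff] at h
  obtain ⟨⟨hw0, hw1⟩, hwx⟩ := hw
  set ε := min (w y) (w z) with hε
  have hε0 : 0 < ε := lt_min hy hz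
  let w' : T → ℝ := fun t => w t - Pi.single (M := fun _ => ℝ) y ε t
    - Pi.single (M := fun _ => ℝ) z ε t + Pi.single (M := fun _ => ℝ) ⟨_, hu⟩ ε t
    + Pi.single (M := fun _ => ℝ) ⟨_, hd⟩ ε t
  have hsum (g : (Fin n → ℤ) → ℝ) : ∑ t, w' t * g t =
      ∑ t, w t * g t + ε * (g (avgUp y z) + g (avgDown y z) - g y - g z) := by
    simp only [w', add_mul, sub_mul, Finset.sum_add_distrib, Finset.sum_sub_distrib,
      Pi.single_apply, ite_mul, zero_mul, Finset.sum_ite_eq',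
      Finset.mem_univ, if_true]
    ring
  have hw' : w' ∈ reprWeights T x := by
    refine ⟨⟨fun t => ?_, ?_⟩, fun i => ?_⟩
    · have h0 := hw0 t
      have h1 : 0 ≤ Pi.single (M := fun _ => ℝ) (⟨_, hu⟩ : T) ε t :=
        (Pi.single_nonneg.2 hε0.le : (0 : T → ℝ) ≤ _) t
      have h2 : 0 ≤ Pi.single (M := fun _ => ℝ) (⟨_, hd⟩ : T) ε t :=
        (Pi.single_nonneg.2 hε0.le : (0 : T → ℝ) ≤ _) t
      have h3 : 0 ≤ w t - Pi.single (M := fun _ => ℝ) y ε t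
          - Pi.single (M := fun _ => ℝ) z ε t := by
        by_cases hty : t = y
        · subst hty
          simp [hyz, hε]
        · by_cases htz : t = z
          · subst htz
            simp [hyz.symm, hε]
          · simpa [hty, htz] using h0
      simp only [w']
      linarith
    · simpa [hw1] using hsum fun _ => 1
    · have hs : (avgUp y z i + avgDown y z i : ℝ) = (y : Fin n → ℤ) i + (z : Fin n → ℤ) i := by
        exact_mod_cast avgUp_add_avgDown (y : Fin n → ℤ) z i
      rw [hsum fun t => (t i : ℝ), hwx, hs]
      ring
  have hle := isMinOn_iff.1 hmin w' hw'
  rw [hsum] at hle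
  have := sqNorm_avg_lt h
  nlinarith

/-- In a representation supported on points at mutual distance at most one, all support points are
in the integral neighborhood of the represented point. -/
lemma mem_intNbhd_of_linf_sub_lt_two {n : ℕ} {T : Set (Fin n → ℤ)} [Fintype T] {x : Fin n → ℝ}
    {w : T → ℝ} (hw : w ∈ reprWeights T x) {y : T} (hy : 0 < w y)
    (hclose : ∀ z, 0 < w z → linf (y - z : Fin n → ℤ) < 2) :
    (y : Fin n → ℤ) ∈ intNbhd x := by
  intro i
  obtain ⟨⟨hw0, hw1⟩, hwx⟩ := hw
  have hdiff : x i - (y : Fin n → ℤ) i =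
      ∑ t : T, w t * ((t : Fin n → ℤ) i - (y : Fin n → ℤ) i : ℝ) := by
    simp [mul_sub, Finset.sum_sub_distrib, hwx, ← Finset.sum_mul, hw1]
  rw [hdiff, ← hw1]
  refine (Finset.abs_sum_le_sum_abs _ _).trans_lt
    (Finset.sum_lt_sum (fun t _ => ?_) ⟨y, Finset.mem_univ _, by simpa using hy⟩)
  rw [abs_mul, abs_of_nonneg (hw0 t)]
  rcases (hw0 t).eq_or_lt with h0 | h0
  · simp [← h0]
  · have hlt := hclose t h0
    rw [← not_le, two_le_linf_iff, not_exists] at hlt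
    have h1 : |(t : Fin n → ℤ) i - (y : Fin n → ℤ) i| ≤ 1 := by
      have := hlt i
      rw [Pi.sub_apply] at this
      rw [Int.abs_eq_natAbs]
      omega
    exact mul_le_of_le_one_right h0.le (by exact_mod_cast h1)

/-- A point in the convex hull of `S` has a representation over the part of `S` in some box. -/
lemma exists_reprWeights_nonempty {n : ℕ} {S : Set (Fin n → ℤ)} {x : Fin n → ℝ}
    (hx : x ∈ convexHull ℝ ((fun z : Fin n → ℤ => fun i => (z i : ℝ)) '' S)) :
    ∃ (a b : Fin n → ℤ) (_ : Fintype ↥(S ∩ Set.Icc a b)),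
      (reprWeights (S ∩ Set.Icc a b) x).Nonempty := by
  classical
  obtain ⟨ι, _, v, q, hv0, hv1, hq, hvx⟩ := mem_convexHull_iff_exists_fintype.1 hx
  choose p hpS hpq using hq
  obtain ⟨a, ha⟩ := (Set.finite_range p).bddBelow
  obtain ⟨b, hb⟩ := (Set.finite_range p).bddAbove
  have hp (k : ι) : p k ∈ S ∩ Set.Icc a b := ⟨hpS k, ha ⟨k, rfl⟩, hb ⟨k, rfl⟩⟩
  let _ : Fintype ↥(S ∩ Set.Icc a b) := ((Set.finite_Icc a b).inter_of_right S).fintype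
  let w : ↥(S ∩ Set.Icc a b) → ℝ := fun t => ∑ k, if t = ⟨p k, hp k⟩ then v k else 0
  have hsum (g : (Fin n → ℤ) → ℝ) : ∑ t, w t * g t = ∑ k, v k * g (p k) := by
    simp only [w, Finset.sum_mul, ite_mul, zero_mul]
    rw [Finset.sum_comm]
    simp
  refine ⟨a, b, inferInstance, w, ⟨fun t => ?_, ?_⟩, fun i => ?_⟩
  · exact Finset.sum_nonneg fun k _ => by split_ifs <;> simp [hv0]
  · simpa [hv1] using hsum fun _ => 1
  · rw [hsum fun t => (t i : ℝ), ← hvx]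
    simp [← hpq]

/-- Every discrete midpoint convex set is integrally convex: each point of the
convex hull of `S` lies in the convex hull of `S ∩ N(x)`. -/
theorem dmcSet_integrallyConvex {n : ℕ} (S : Set (Fin n → ℤ)) (hS : DMCSet S)
    (x : Fin n → ℝ)
    (hx : x ∈ convexHull ℝ ((fun z : Fin n → ℤ => fun i => (z i : ℝ)) '' S)) :
    x ∈ convexHull ℝ
      ((fun z : Fin n → ℤ => fun i => (z i : ℝ)) '' (S ∩ intNbhd x)) := by
  classical
  obtain ⟨a, b, _, hne⟩ := exists_reprWeights_nonempty hx
  obtain ⟨w, hw, hmin⟩ := (isCompact_reprWeights _ x).exists_isMinOn hne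
    (f := fun w => ∑ t, w t * sqNorm (t : Fin n → ℤ)) (by fun_prop)
  have hx' : ∑ t with w t ≠ 0, w t • (fun i => ((t : Fin n → ℤ) i : ℝ)) = x := by
    rw [Finset.sum_filter_of_ne (p := fun t => w t ≠ 0) fun t _ h h0 => h (by simp [h0])]
    ext i
    simpa using hw.2 i
  rw [← hx']
  refine (convex_convexHull ℝ _).sum_mem (fun t _ => hw.1.1 t) ?_ fun t ht => ?_
  · rw [Finset.sum_filter_ne_zero, hw.1.2]
  · have ht0 : 0 < w t := (hw.1.1 t).lt_of_ne' (Finset.mem_filter.1 ht).2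
    rw [hx']
    exact subset_convexHull ℝ _ ⟨t, ⟨t.2.1, mem_intNbhd_of_linf_sub_lt_two hw ht0 fun z hz =>
      linf_sub_lt_two_of_isMinOn (hS.inter_Icc a b) hw hmin ht0 hz⟩, rfl⟩
end

section
/- Let S ⊆ ℤⁿ be a discrete midpoint convex set, let x, y ∈ S, let m = ‖y − x‖∞, and let y − x = Σ_{k=1}^m (1_{A_k} − 1_{B_k}) be the canonical decomposition with A_k = {i : y_i − x_i ≥ m+1−k} and B_k = {i : y_i − x_i ≤ −k}. Then for every subset J ⊆ {1,…,m} and d = Σ_{k∈J} (1_{A_k} − 1_{B_k}), both x + d and y − d belong to S. -/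
open Finset

lemma natAbs_le_linf {n : ℕ} (z : Fin n → ℤ) (i : Fin n) : (z i).natAbs ≤ linf z :=
  Finset.le_sup (f := fun i => (z i).natAbs) (mem_univ i)

lemma exists_natAbs_eq_linf {n : ℕ} {z : Fin n → ℤ} (h : 0 < linf z) :
    ∃ i, (z i).natAbs = linf z := by
  have hne : (univ : Finset (Fin n)).Nonempty := by
    by_contra hn
    rw [not_nonempty_iff_eq_empty] at hn
    simp [linf, hn] at h
  obtain ⟨i, -, hi⟩ := exists_mem_eq_sup univ hne (fun i => (z i).natAbs)
  exact ⟨i, hi.symm⟩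

lemma linf_eq_of_le_of_eq {n : ℕ} {z : Fin n → ℤ} {m : ℕ} (h : ∀ i, (z i).natAbs ≤ m)
    (i : Fin n) (hi : (z i).natAbs = m) : linf z = m :=
  le_antisymm (Finset.sup_le fun i _ => h i) (hi ▸ natAbs_le_linf z i)

lemma avgUp_eq {n : ℕ} (x y : Fin n → ℤ) :
    avgUp x y = x + fun i => (y i - x i + 1) / 2 := by
  funext i
  simp only [avgUp, Pi.add_apply]
  rw [Int.ceil_eq_iff]
  obtain ⟨h₁, h₂⟩ : x i + y i ≤ 2 * (x i + (y i - x i + 1) / 2) ∧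
      2 * (x i + (y i - x i + 1) / 2) ≤ x i + y i + 1 := by omega
  generalize x i + (y i - x i + 1) / 2 = c at *
  have hc₁ : (x i + y i : ℚ) ≤ 2 * c := by exact_mod_cast h₁
  have hc₂ : (2 * c : ℚ) ≤ x i + y i + 1 := by exact_mod_cast h₂
  constructor <;> linarith

lemma avgDown_eq {n : ℕ} (x y : Fin n → ℤ) :
    avgDown x y = x + fun i => (y i - x i) / 2 := by
  funext i
  simp only [avgDown, Pi.add_apply]
  rw [Int.floor_eq_iff]
  obtain ⟨h₁, h₂⟩ : 2 * (x i + (y i - x i) / 2) ≤ x i + y i ∧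
      x i + y i ≤ 2 * (x i + (y i - x i) / 2) + 1 := by omega
  generalize x i + (y i - x i) / 2 = c at *
  have hc₁ : (2 * c : ℚ) ≤ x i + y i := by exact_mod_cast h₁
  have hc₂ : (x i + y i : ℚ) ≤ 2 * c + 1 := by exact_mod_cast h₂
  constructor <;> linarith

/-- The value at a coordinate with difference `t` of the `k`-th vector of the canonical
decomposition of a vector of norm `m`. -/
def stepCoord (m : ℕ) (t : ℤ) (k : ℕ) : ℤ :=
  (if (m : ℤ) + 1 - (k : ℤ) ≤ t then (1 : ℤ) else 0) - (if t ≤ -(k : ℤ) then (1 : ℤ) else 0)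

/-- The partial sum over `J` of the canonical decomposition of `t`, regarded as a vector of
norm `m`. -/
def stepSum {n : ℕ} (m : ℕ) (t : Fin n → ℤ) (J : Finset ℕ) : Fin n → ℤ :=
  fun i => ∑ k ∈ J, stepCoord m (t i) k

@[simp]
lemma stepSum_empty {n : ℕ} (m : ℕ) (t : Fin n → ℤ) : stepSum m t ∅ = 0 := rfl

lemma stepSum_singleton {n : ℕ} (m : ℕ) (t : Fin n → ℤ) (k : ℕ) :
    stepSum m t {k} = fun i => stepCoord m (t i) k :=
  funext fun _ => sum_singleton _ _

lemma sum_stepCoord (m : ℕ) (t : ℤ) (K : Finset ℕ) :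
    ∑ k ∈ K, stepCoord m t k =
      (#{k ∈ K | (m : ℤ) + 1 - ((k : ℕ) : ℤ) ≤ t} : ℤ) - #{k ∈ K | t ≤ -((k : ℕ) : ℤ)} := by
  simp [stepCoord, sum_sub_distrib, sum_boole]

lemma natAbs_sum_stepCoord_le (m : ℕ) (t : ℤ) (K : Finset ℕ) :
    (∑ k ∈ K, stepCoord m t k).natAbs ≤ #K := by
  rw [sum_stepCoord]
  have h₁ := card_filter_le K fun k : ℕ => (m : ℤ) + 1 - (k : ℤ) ≤ t
  have h₂ := card_filter_le K fun k : ℕ => t ≤ -(k : ℤ)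
  omega

lemma natAbs_sum_stepCoord_of_natAbs_eq {m : ℕ} {t : ℤ} {K : Finset ℕ} (hK : K ⊆ Icc 1 m)
    (ht : t.natAbs = m) : (∑ k ∈ K, stepCoord m t k).natAbs = #K := by
  rcases Int.natAbs_eq t with h | h
  · have : ∀ k ∈ K, stepCoord m t k = 1 := fun k hk => by
      have := mem_Icc.1 (hK hk)
      unfold stepCoord
      split_ifs <;> omega
    simp [sum_congr rfl this]
  · have : ∀ k ∈ K, stepCoord m t k = -1 := fun k hk => by
      have := mem_Icc.1 (hK hk)
      unfold stepCoord
      split_ifs <;> omega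
    simp [sum_congr rfl this]

lemma sum_Icc_stepCoord {m : ℕ} {t : ℤ} (ht : t.natAbs ≤ m) :
    ∑ k ∈ Icc 1 m, stepCoord m t k = t := by
  rw [sum_stepCoord]
  have h₁ : {k ∈ Icc 1 m | (m : ℤ) + 1 - ((k : ℕ) : ℤ) ≤ t} = Icc (m + 1 - t.toNat) m := by
    ext k; simp only [mem_filter, mem_Icc]; omega
  have h₂ : {k ∈ Icc 1 m | t ≤ -((k : ℕ) : ℤ)} = Icc 1 (-t).toNat := by
    ext k; simp only [mem_filter, mem_Icc]; omega
  rw [h₁, h₂, Nat.card_Icc, Nat.card_Icc]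
  omega

/-- Partial sums of the canonical decomposition are themselves canonically decomposed, with
indices relabelled by their rank. -/
lemma stepCoord_rank {m : ℕ} {t : ℤ} {K : Finset ℕ} (hK : K ⊆ Icc 1 m) {k : ℕ} (hk : k ∈ K) :
    stepCoord #K (∑ j ∈ K, stepCoord m t j) #{j ∈ K | j ≤ k} = stepCoord m t k := by
  have hkm := mem_Icc.1 (hK hk)
  have hρ := card_filter_le K fun j => j ≤ k
  have hρ₁ : 0 < #{j ∈ K | j ≤ k} := card_pos.2 ⟨k, by simp [hk]⟩
  rw [sum_stepCoord]
  rcases lt_or_ge 0 t with ht | ht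
  · have hq : #{j ∈ K | t ≤ -((j : ℕ) : ℤ)} = 0 := by
      rw [card_eq_zero, filter_eq_empty_iff]
      intro j _; omega
    have hp := card_filter_add_card_filter_not (s := K) fun j : ℕ => (m : ℤ) + 1 - (j : ℤ) ≤ t
    by_cases hkt : (m : ℤ) + 1 - (k : ℤ) ≤ t
    · have : #{j ∈ K | ¬ (m : ℤ) + 1 - ((j : ℕ) : ℤ) ≤ t} < #{j ∈ K | j ≤ k} := by
        refine card_lt_card ((ssubset_iff_of_subset ?_).2
          ⟨k, by simp [hk], fun h => (mem_filter.1 h).2 hkt⟩)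
        intro j hj
        obtain ⟨hjK, hj⟩ := mem_filter.1 hj
        exact mem_filter.2 ⟨hjK, by omega⟩
      unfold stepCoord
      split_ifs <;> omega
    · have : #{j ∈ K | j ≤ k} ≤ #{j ∈ K | ¬ (m : ℤ) + 1 - ((j : ℕ) : ℤ) ≤ t} := by
        refine card_le_card ?_
        intro j hj
        obtain ⟨hjK, hj⟩ := mem_filter.1 hj
        exact mem_filter.2 ⟨hjK, by omega⟩
      unfold stepCoord
      split_ifs <;> omega
  · have hp : #{j ∈ K | (m : ℤ) + 1 - ((j : ℕ) : ℤ) ≤ t} = 0 := by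
      rw [card_eq_zero, filter_eq_empty_iff]
      intro j hj
      have := mem_Icc.1 (hK hj)
      omega
    by_cases hkt : t ≤ -(k : ℤ)
    · have : #{j ∈ K | j ≤ k} ≤ #{j ∈ K | t ≤ -((j : ℕ) : ℤ)} := by
        refine card_le_card ?_
        intro j hj
        obtain ⟨hjK, hj⟩ := mem_filter.1 hj
        exact mem_filter.2 ⟨hjK, by omega⟩
      unfold stepCoord
      split_ifs <;> omega
    · have : #{j ∈ K | t ≤ -((j : ℕ) : ℤ)} < #{j ∈ K | j ≤ k} := by
        refine card_lt_card ((ssubset_iff_of_subset ?_).2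
          ⟨k, by simp [hk], fun h => hkt (mem_filter.1 h).2⟩)
        intro j hj
        obtain ⟨hjK, hj⟩ := mem_filter.1 hj
        exact mem_filter.2 ⟨hjK, by omega⟩
      unfold stepCoord
      split_ifs <;> omega

/-- Every partial sum of the canonical decomposition of a difference of norm `m` between two
points of `S` leads to a point of `S`. -/
def ParallelogramAt {n : ℕ} (S : Set (Fin n → ℤ)) (m : ℕ) : Prop :=
  ∀ ⦃x⦄, x ∈ S → ∀ ⦃t⦄, x + t ∈ S → linf t = m → ∀ J ⊆ Icc 1 m, x + stepSum m t J ∈ S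

section

variable {n : ℕ} {S : Set (Fin n → ℤ)}

lemma rank_strictMonoOn (K : Finset ℕ) : StrictMonoOn (fun k => #{j ∈ K | j ≤ k}) K := by
  intro a _ b hb hab
  refine card_lt_card ((ssubset_iff_of_subset ?_).2 ⟨b, by simpa using hb, by simp [hab]⟩)
  intro j hj
  obtain ⟨hjK, hj⟩ := mem_filter.1 hj
  exact mem_filter.2 ⟨hjK, by omega⟩

lemma ParallelogramAt.add_stepSum_mem {m : ℕ} {K J : Finset ℕ} (hP : ParallelogramAt S #K)
    {t z : Fin n → ℤ} (ht : linf t = m) (hK : K ⊆ Icc 1 m) (hJ : J ⊆ K) (hz : z ∈ S)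
    (hzK : z + stepSum m t K ∈ S) : z + stepSum m t J ∈ S := by
  have hlinf : linf (stepSum m t K) = #K := by
    rcases Nat.eq_zero_or_pos m with rfl | hm
    · obtain rfl : K = ∅ := by simpa using hK
      simp [linf, stepSum]
    · obtain ⟨i, hi⟩ := exists_natAbs_eq_linf (ht.symm ▸ hm)
      exact linf_eq_of_le_of_eq (fun i => natAbs_sum_stepCoord_le m (t i) K) i
        (natAbs_sum_stepCoord_of_natAbs_eq hK (hi.trans ht))
  have h := hP hz hzK hlinf (J.image fun k => #{j ∈ K | j ≤ k}) (by
    intro r hr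
    obtain ⟨k, hk, rfl⟩ := mem_image.1 hr
    exact mem_Icc.2 ⟨card_pos.2 ⟨k, by simp [hJ hk]⟩, card_filter_le _ _⟩)
  convert h using 2
  funext i
  rw [stepSum, stepSum, sum_image ((rank_strictMonoOn K).injOn.mono (by exact_mod_cast hJ))]
  exact sum_congr rfl fun k hk => (stepCoord_rank hK (hJ hk)).symm

lemma stepSum_Icc {m : ℕ} {t : Fin n → ℤ} (ht : linf t = m) : stepSum m t (Icc 1 m) = t :=
  funext fun i => sum_Icc_stepCoord (ht ▸ natAbs_le_linf t i)

lemma stepSum_insert {m : ℕ} {t : Fin n → ℤ} {k : ℕ} {J : Finset ℕ} (hk : k ∉ J) :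
    stepSum m t (insert k J) = stepSum m t {k} + stepSum m t J := by
  funext i
  simp [stepSum, sum_insert hk]

/-- One step of the canonical decomposition inside `S` forces all its partial sums inside `S`. -/
lemma add_stepSum_mem_of_singleton {m : ℕ} (hm : 3 ≤ m) (hP : ∀ l < m, ParallelogramAt S l)
    {x t : Fin n → ℤ} (hx : x ∈ S) (hxt : x + t ∈ S) (ht : linf t = m) {k : ℕ}
    (hk : k ∈ Icc 1 m) (hxk : x + stepSum m t {k} ∈ S) (J : Finset ℕ) (hJ : J ⊆ Icc 1 m) :
    x + stepSum m t J ∈ S := by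
  have extend : ∀ j ∈ Icc 1 m, x + stepSum m t {j} ∈ S → ∀ J ⊆ Icc 1 m, j ∈ J →
      x + stepSum m t J ∈ S := by
    intro j hj hxj J hJ hjJ
    have hcard : #((Icc 1 m).erase j) < m := by
      rw [card_erase_of_mem hj, Nat.card_Icc]; omega
    have h := (hP _ hcard).add_stepSum_mem ht (erase_subset _ _) (erase_subset_erase j hJ) hxj
      (by rwa [add_assoc, ← stepSum_insert (notMem_erase _ _), insert_erase hj, stepSum_Icc ht])
    rwa [add_assoc, ← stepSum_insert (notMem_erase _ _), insert_erase hjJ] at h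
  have single : ∀ j ∈ Icc 1 m, x + stepSum m t {j} ∈ S := by
    intro j hj
    have hsub : ({k, j} : Finset ℕ) ⊆ Icc 1 m := by
      simp [insert_subset_iff, hk, hj, -mem_Icc]
    exact (hP _ (card_le_two.trans_lt hm)).add_stepSum_mem ht hsub (by simp) hx
      (extend k hk hxk _ hsub (by simp))
  rcases J.eq_empty_or_nonempty with rfl | ⟨j, hj⟩
  · simpa using hx
  · exact extend j (hJ hj) (single j (hJ hj)) J hJ hj

lemma DMCSet.half_mem (hS : DMCSet S) {x t : Fin n → ℤ} (hx : x ∈ S) (hxt : x + t ∈ S)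
    (ht : 2 ≤ linf t) :
    (x + fun i => (t i + 1) / 2) ∈ S ∧ (x + fun i => t i / 2) ∈ S := by
  have h := hS hx hxt (by simpa [linf] using ht)
  rw [avgUp_eq, avgDown_eq] at h
  simpa using h

lemma parallelogramAt_two (hS : DMCSet S) : ParallelogramAt S 2 := by
  intro x hx t hxt ht J hJ
  obtain ⟨hup, hdown⟩ := hS.half_mem hx hxt ht.ge
  have hle := fun i => ht ▸ natAbs_le_linf t i
  have h₂ : x + stepSum 2 t {2} ∈ S := by
    convert hup using 2
    funext i
    have := hle i
    simp only [stepSum, sum_singleton, stepCoord]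
    split_ifs <;> omega
  have h₁ : x + stepSum 2 t {1} ∈ S := by
    convert hdown using 2
    funext i
    have := hle i
    simp only [stepSum, sum_singleton, stepCoord]
    split_ifs <;> omega
  have hcases : J = ∅ ∨ J = {1} ∨ J = {2} ∨ J = Icc 1 2 := by
    have : J ∈ (Icc 1 2).powerset := mem_powerset.2 hJ
    revert this
    generalize J = K
    revert K
    decide
  rcases hcases with rfl | rfl | rfl | rfl
  · simpa using hx
  · exact h₁
  · exact h₂
  · rwa [stepSum_Icc ht]

/-- Each single step of the canonical decomposition of `h` is available in `S`. -/
lemma add_stepCoord_mem_of_parallelogramAt {h : Fin n → ℤ} {l : ℕ} (hP : ParallelogramAt S l)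
    {x : Fin n → ℤ} (hx : x ∈ S) (hxh : x + h ∈ S) (hle : ∀ i, (h i).natAbs ≤ l) (i : Fin n)
    (hi : (h i).natAbs = l) {k : ℕ} (hk : k ∈ Icc 1 l) :
    (x + fun i => stepCoord l (h i) k) ∈ S := by
  simpa [stepSum_singleton] using hP hx hxh (linf_eq_of_le_of_eq hle i hi) {k} (by simpa using hk)

lemma parallelogramAt_of_even (hS : DMCSet S) {r : ℕ} (hr : 2 ≤ r)
    (hP : ∀ l < 2 * r, ParallelogramAt S l) : ParallelogramAt S (2 * r) := by
  intro x hx t hxt ht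
  have hle := fun i => ht ▸ natAbs_le_linf t i
  obtain ⟨i, hi⟩ := exists_natAbs_eq_linf (z := t) (by omega)
  refine add_stepSum_mem_of_singleton (by omega) hP hx hxt ht (k := 2) (by simp; omega) ?_
  convert add_stepCoord_mem_of_parallelogramAt (hP r (by omega)) hx (hS.half_mem hx hxt (by omega)).1
    (fun i => by have := hle i; omega) i (by omega) (k := 1) (by simp; omega) using 2
  funext i
  have := hle i
  simp only [stepSum, sum_singleton, stepCoord]
  split_ifs <;> omega

/-- The case of odd norm in which `-m` is not attained. -/
lemma add_stepSum_mem_of_odd_of_neg_lt (hS : DMCSet S) {m r : ℕ} (hmr : m = 2 * r + 1)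
    (hr : 1 ≤ r) (hP : ∀ l < m, ParallelogramAt S l) {x t : Fin n → ℤ} (hx : x ∈ S)
    (hxt : x + t ∈ S) (ht : linf t = m) (hneg : ∀ i, -(m : ℤ) < t i) (J : Finset ℕ)
    (hJ : J ⊆ Icc 1 m) : x + stepSum m t J ∈ S := by
  have hle := fun i => ht ▸ natAbs_le_linf t i
  obtain ⟨i, hi⟩ := exists_natAbs_eq_linf (z := t) (by omega)
  have := hneg i
  refine add_stepSum_mem_of_singleton (by omega) hP hx hxt ht (k := m) (by simp; omega) ?_ J hJ
  convert add_stepCoord_mem_of_parallelogramAt (hP (r + 1) (by omega)) hx (hS.half_mem hx hxt (by omega)).1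
    (fun i => by have := hle i; omega) i (by omega) (k := r + 1) (by simp) using 2
  funext i
  have := hle i
  have := hneg i
  simp only [stepSum, sum_singleton, stepCoord]
  split_ifs <;> omega

lemma parallelogramAt_of_odd (hS : DMCSet S) {m r : ℕ} (hmr : m = 2 * r + 1) (hr : 1 ≤ r)
    (hP : ∀ l < m, ParallelogramAt S l) : ParallelogramAt S m := by
  intro x hx t hxt ht J hJ
  by_cases hneg : ∀ i, -(m : ℤ) < t i
  · exact add_stepSum_mem_of_odd_of_neg_lt hS hmr hr hP hx hxt ht hneg J hJ
  push Not at hneg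
  obtain ⟨i₀, hi₀⟩ := hneg
  have hle := fun i => ht ▸ natAbs_le_linf t i
  have hle₀ := hle i₀
  refine add_stepSum_mem_of_singleton (by omega) hP hx hxt ht (k := 1) (by simp; omega) ?_ J hJ
  have hw := add_stepCoord_mem_of_parallelogramAt (hP (r + 1) (by omega)) hx
    (hS.half_mem hx hxt (by omega)).2 (fun i => by have := hle i; omega) i₀ (by omega) (k := 1)
    (by simp)
  by_cases hpos : ∀ i, t i < m
  · convert hw using 2
    funext i
    have := hle i
    have := hpos i
    simp only [stepSum, sum_singleton, stepCoord]
    split_ifs <;> omega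
  push Not at hpos
  obtain ⟨i₁, hi₁⟩ := hpos
  have hle₁ := hle i₁
  -- Moving from `x` along `w = -1_{t < 0}` leaves a difference that no longer attains `-m`.
  obtain ⟨w, hwdef⟩ : ∃ w : Fin n → ℤ, w = fun i => if t i ≤ -1 then -1 else 0 := ⟨_, rfl⟩
  have hwi : ∀ i, w i = if t i ≤ -1 then -1 else 0 := fun i => by rw [hwdef]
  have hxw : x + w ∈ S := by
    convert hw using 2
    funext i
    have := hle i
    rw [hwi]
    simp only [stepCoord]
    split_ifs <;> omega
  have htw : linf (t - w) = m := by
    refine linf_eq_of_le_of_eq (fun i => ?_) i₁ ?_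
    · have := hle i
      rw [Pi.sub_apply, hwi]
      split_ifs <;> omega
    · rw [Pi.sub_apply, hwi]
      split_ifs <;> omega
  have hz := add_stepSum_mem_of_odd_of_neg_lt hS hmr hr hP hxw (t := t - w) (by simpa using hxt)
    htw (fun i => by
      have := hle i
      rw [Pi.sub_apply, hwi]
      split_ifs <;> omega) {1, m} (by
      intro k; simp only [mem_insert, mem_singleton, mem_Icc]; omega)
  rw [add_assoc] at hz
  have hval : ∀ i, (w + stepSum m (t - w) {1, m}) i =
      w i + (stepCoord m (t i - w i) 1 + stepCoord m (t i - w i) m) := fun i => by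
    simp [stepSum, sum_pair (show 1 ≠ m by omega)]
  have htwo : 2 ≤ linf (w + stepSum m (t - w) {1, m}) := by
    refine le_trans ?_ (natAbs_le_linf _ i₁)
    rw [hval, hwi]
    unfold stepCoord
    split_ifs <;> omega
  convert (hS.half_mem hx hz htwo).2 using 2
  funext i
  have := hle i
  rw [hval, hwi]
  simp only [stepSum, sum_singleton, stepCoord]
  split_ifs <;> omega

lemma DMCSet.parallelogramAt (hS : DMCSet S) (m : ℕ) : ParallelogramAt S m := by
  induction m using Nat.strong_induction_on with
  | _ m hP =>
    rcases Nat.even_or_odd' m with ⟨r, hr | hr⟩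
    · rcases (by omega : r = 0 ∨ r = 1 ∨ 2 ≤ r) with rfl | rfl | h
      · subst hr
        intro x hx t _ _ J hJ
        obtain rfl : J = ∅ := by simpa using hJ
        simpa using hx
      · subst hr
        exact parallelogramAt_two hS
      · subst hr
        exact parallelogramAt_of_even hS h hP
    · rcases Nat.eq_zero_or_pos r with rfl | h
      · intro x hx t hxt ht J hJ
        subst hr
        rcases subset_singleton_iff.1 (show J ⊆ {1} by simpa using hJ) with rfl | rfl
        · simpa using hx
        · have := stepSum_Icc ht
          simp only [mul_zero, zero_add, Icc_self] at this ⊢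
          rwa [this]
      · exact parallelogramAt_of_odd hS hr h hP

end

/-- The "parallelogram property" of discrete midpoint convex sets: with
`m = ‖y − x‖∞`, `A_k = {i : y_i − x_i ≥ m+1−k}`, `B_k = {i : y_i − x_i ≤ −k}`,
and `d = Σ_{k∈J} (1_{A_k} − 1_{B_k})` for `J ⊆ {1,…,m}`, both `x + d` and
`y − d` belong to `S`. -/
theorem dmcSet_parallelogram {n : ℕ} (S : Set (Fin n → ℤ)) (hS : DMCSet S)
    (x y : Fin n → ℤ) (hx : x ∈ S) (hy : y ∈ S)
    (m : ℕ) (hm : m = linf (y - x))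
    (J : Finset ℕ) (hJ : J ⊆ Finset.Icc 1 m)
    (d : Fin n → ℤ)
    (hd : d = fun i => ∑ k ∈ J,
      ((if (m : ℤ) + 1 - (k : ℤ) ≤ y i - x i then (1 : ℤ) else 0)
        - (if y i - x i ≤ -(k : ℤ) then (1 : ℤ) else 0))) :
    x + d ∈ S ∧ y - d ∈ S := by
  have hmem : ∀ K ⊆ Icc 1 m, x + stepSum m (y - x) K ∈ S :=
    hS.parallelogramAt m hx (by simpa using hy) hm.symm
  obtain rfl : d = stepSum m (y - x) J := hd
  refine ⟨hmem J hJ, ?_⟩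
  convert hmem (Icc 1 m \ J) sdiff_subset using 1
  have hsum : stepSum m (y - x) (Icc 1 m \ J) + stepSum m (y - x) J = y - x := by
    conv_rhs => rw [← stepSum_Icc hm.symm]
    funext i
    exact sum_sdiff hJ
  rw [sub_eq_iff_eq_add, add_assoc, hsum, add_sub_cancel]
end
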